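/- arXiv:2511.05840 — 2 statements merged into one kernel-verified Lean document; each statement's English description precedes it below -/
import Mathlib

section
/- Let (Ω,𝔽,P) be a probability space with a filtration (ℱ_t)_{t=0,…,T}, let (L_t)_{t=1,…,T} be an adapted real-valued process, let (R_t), (Z_t) and (λ_t) be predictable processes with λ_t taking values in [0,1], and let V:ℝ×ℝ×ℝ^{d−1}→ℝ be measurable with V(L_t,R_t,Z_t) ≥ −1 almost surely for each t. Suppose that for every t, E[V(L_t,R_t,Z_t) | ℱ_{t−1}] ≤ 0 almost surely (as holds under the one-sided null hypothesis H(ψ) that R_t ≥ ρ(L_t|ℱ_{t−1}) and Z_t ∈ φ(L_t|ℱ_{t−1}) for all t, when (v,V) is an identification function for ψ=(ρ,φ) and a ↦ V(x,a,b) is decreasing). Then the process defined by M_0 = 1 and M_t = ∏_{s=1}^{t}(1+λ_s V(L_s,R_s,Z_s)) is a nonnegative supermartingale with respect to (ℱ_t), and hence an e-process: E[M_τ] ≤ 1 for every stopping time τ ≤ T. -/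
open MeasureTheory

/-- A real process that satisfies the supermartingale properties up to time `T` becomes a
supermartingale once it is frozen at `T`. -/
theorem supermartingale_min {Ω : Type*} {m0 : MeasurableSpace Ω} {μ : Measure Ω}
    [IsFiniteMeasure μ] {ℱ : Filtration ℕ m0} {T : ℕ} {M : ℕ → Ω → ℝ}
    (hmeas : ∀ t, t ≤ T → StronglyMeasurable[ℱ t] (M t))
    (hint : ∀ t, t ≤ T → Integrable (M t) μ)
    (hle : ∀ t, t < T → μ[M (t + 1) | ℱ t] ≤ᵐ[μ] M t) :
    Supermartingale (fun t => M (min t T)) ℱ μ := by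
  have hadp : ∀ t, StronglyMeasurable[ℱ t] (M (min t T)) := fun t =>
    (hmeas _ (min_le_right _ _)).mono (ℱ.mono (min_le_left _ _))
  refine supermartingale_nat hadp (fun t => hint _ (min_le_right _ _)) fun t => ?_
  rcases lt_or_ge t T with ht | ht
  · simpa only [min_eq_left ht.le, min_eq_left (Nat.succ_le_of_lt ht)] using hle t ht
  · have hmeasT : StronglyMeasurable[ℱ t] (M T) := (hmeas T le_rfl).mono (ℱ.mono ht)
    simp only [min_eq_right ht, min_eq_right (ht.trans t.le_succ)]
    rw [condExp_of_stronglyMeasurable (ℱ.le t) hmeasT (hint T le_rfl)]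

/-- Optional stopping for a supermartingale on a finite horizon. -/
theorem integral_stoppedValue_le_of_condExp_le {Ω : Type*} {m0 : MeasurableSpace Ω}
    {μ : Measure Ω} [IsFiniteMeasure μ] {ℱ : Filtration ℕ m0} {T : ℕ} {M : ℕ → Ω → ℝ}
    (hmeas : ∀ t, t ≤ T → StronglyMeasurable[ℱ t] (M t))
    (hint : ∀ t, t ≤ T → Integrable (M t) μ)
    (hle : ∀ t, t < T → μ[M (t + 1) | ℱ t] ≤ᵐ[μ] M t)
    {τ : Ω → ℕ} (hτ : IsStoppingTime ℱ (fun ω => (τ ω : WithTop ℕ))) (hτT : ∀ ω, τ ω ≤ T) :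
    ∫ ω, stoppedValue M (fun ω => (τ ω : WithTop ℕ)) ω ∂μ ≤ ∫ ω, M 0 ω ∂μ := by
  have hmono := (supermartingale_min hmeas hint hle).neg.expected_stoppedValue_mono
    (isStoppingTime_const ℱ 0) hτ (fun ω => WithTop.coe_le_coe.mpr (Nat.zero_le (τ ω)))
    (N := T) (fun ω => WithTop.coe_le_coe.mpr (hτT ω))
  have huntop : ∀ ω, (τ ω : WithTop ℕ).untopA = τ ω := fun _ => rfl
  simpa [stoppedValue, integral_neg, huntop, hτT] using hmono

/-- A bet `w ≥ 0` known at `m` on a payoff `X` of nonpositive conditional mean, added to a current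
value `f` known at `m`, does not increase the conditional mean. -/
theorem condExp_add_mul_le {Ω : Type*} {m m0 : MeasurableSpace Ω} {μ : Measure Ω}
    [IsFiniteMeasure μ] (hm : m ≤ m0) {f w X : Ω → ℝ}
    (hf : StronglyMeasurable[m] f) (hfint : Integrable f μ)
    (hw : StronglyMeasurable[m] w) (hw0 : 0 ≤ᵐ[μ] w)
    (hX : Integrable X μ) (hwX : Integrable (w * X) μ) (hX0 : μ[X | m] ≤ᵐ[μ] 0) :
    μ[f + w * X | m] ≤ᵐ[μ] f := by
  filter_upwards [condExp_add hfint hwX m, condExp_mul_of_stronglyMeasurable_left hw hwX hX,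
    hw0, hX0] with ω hadd hmul hwω hXω
  rw [hadd, Pi.add_apply, hmul, condExp_of_stronglyMeasurable hm hf hfint, Pi.mul_apply]
  exact add_le_of_nonpos_right (mul_nonpos_of_nonneg_of_nonpos hwω hXω)

/-- Theorem iden (i), one-sided case: with predictable `R, Z, λ`,
`λ_t ∈ [0,1]`, `V(L_t,R_t,Z_t) ≥ −1` a.s., and
`E[V(L_t,R_t,Z_t) | ℱ_{t−1}] ≤ 0` a.s. for every `t` (the one-sided null `H(ψ)`),
the process `M_t = ∏_{s=1}^t (1 + λ_s V(L_s,R_s,Z_s))`, `M_0 = 1`, is a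
nonnegative supermartingale, hence an e-process: `E[M_τ] ≤ 1` for every stopping
time `τ ≤ T`. -/
theorem stmt8 {Ω : Type*} {m0 : MeasurableSpace Ω}
    (μ : Measure Ω) [IsProbabilityMeasure μ]
    (ℱ : Filtration ℕ m0) (T : ℕ) {k : ℕ}
    (L R lam : ℕ → Ω → ℝ) (Z : ℕ → Ω → (Fin k → ℝ))
    (V : ℝ → ℝ → (Fin k → ℝ) → ℝ)
    (hV : Measurable fun p : ℝ × ℝ × (Fin k → ℝ) => V p.1 p.2.1 p.2.2)
    (hL : ∀ t, t ≤ T → StronglyMeasurable[ℱ t] (L t))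
    (hR : ∀ t, t < T → StronglyMeasurable[ℱ t] (R (t + 1)))
    (hZ : ∀ t, t < T → StronglyMeasurable[ℱ t] (Z (t + 1)))
    (hlam : ∀ t, t < T → StronglyMeasurable[ℱ t] (lam (t + 1)))
    (hlam01 : ∀ t ω, lam t ω ∈ Set.Icc (0:ℝ) 1)
    (hVm1 : ∀ t, 1 ≤ t → t ≤ T → ∀ᵐ ω ∂μ, -1 ≤ V (L t ω) (R t ω) (Z t ω))
    (hVint : ∀ t, t < T →
      Integrable (fun ω => V (L (t + 1) ω) (R (t + 1) ω) (Z (t + 1) ω)) μ)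
    -- conditional mean at most zero (the one-sided null `H(ψ)`)
    (hcond : ∀ t, t < T →
      μ[fun ω => V (L (t + 1) ω) (R (t + 1) ω) (Z (t + 1) ω) | ℱ t] ≤ᵐ[μ] 0)
    (M : ℕ → Ω → ℝ)
    (hMdef : ∀ t ω, M t ω = ∏ s ∈ Finset.range t,
      (1 + lam (s + 1) ω * V (L (s + 1) ω) (R (s + 1) ω) (Z (s + 1) ω)))
    (hMint : ∀ t, t ≤ T → Integrable (M t) μ) :
    -- `(M_t)` is a nonnegative supermartingale w.r.t. `(ℱ_t)`
    (∀ t, t ≤ T → StronglyMeasurable[ℱ t] (M t)) ∧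
    (∀ t, t ≤ T → ∀ᵐ ω ∂μ, 0 ≤ M t ω) ∧
    (∀ t, t < T → μ[M (t + 1) | ℱ t] ≤ᵐ[μ] M t) ∧
    -- hence an e-process: `E[M_τ] ≤ 1` for every stopping time `τ ≤ T`
    (∀ τ : Ω → ℕ, IsStoppingTime ℱ (fun ω => (τ ω : WithTop ℕ)) → (∀ ω, τ ω ≤ T) →
      ∫ ω, stoppedValue M (fun ω => (τ ω : WithTop ℕ)) ω ∂μ ≤ 1) := by
  have hmeas : ∀ t, t ≤ T → StronglyMeasurable[ℱ t] (M t) := by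
    intro t ht
    rw [show M t = fun ω => _ from funext (hMdef t)]
    refine Finset.stronglyMeasurable_fun_prod _ fun s hs => ?_
    have hst : s + 1 ≤ t := Finset.mem_range.mp hs
    have hsT : s < T := hst.trans ht
    have hpred : ℱ s ≤ ℱ t := ℱ.mono (Nat.le_of_succ_le hst)
    have hVmeas : Measurable[ℱ t]
        fun ω => V (L (s + 1) ω) (R (s + 1) ω) (Z (s + 1) ω) :=
      hV.comp (((hL (s + 1) hsT).mono (ℱ.mono hst)).measurable.prodMk
        (((hR s hsT).mono hpred).measurable.prodMk ((hZ s hsT).mono hpred).measurable))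
    exact stronglyMeasurable_const.add
      (((hlam s hsT).mono hpred).mul hVmeas.stronglyMeasurable)
  have hnonneg : ∀ t, t ≤ T → ∀ᵐ ω ∂μ, 0 ≤ M t ω := by
    intro t ht
    have hV1 : ∀ᵐ ω ∂μ, ∀ s ∈ Finset.range t,
        -1 ≤ V (L (s + 1) ω) (R (s + 1) ω) (Z (s + 1) ω) :=
      (ae_ball_iff (Finset.range t).countable_toSet).mpr fun s hs =>
        hVm1 (s + 1) (Nat.le_add_left 1 s) ((Finset.mem_range.mp hs).trans_le ht)
    filter_upwards [hV1] with ω hω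
    rw [hMdef]
    refine Finset.prod_nonneg fun s hs => ?_
    obtain ⟨h0, h1⟩ := hlam01 (s + 1) ω
    nlinarith [mul_le_mul_of_nonneg_left (hω s hs) h0]
  have hle : ∀ t, t < T → μ[M (t + 1) | ℱ t] ≤ᵐ[μ] M t := by
    intro t ht
    have hsucc : M (t + 1) = M t + (M t * lam (t + 1)) *
        fun ω => V (L (t + 1) ω) (R (t + 1) ω) (Z (t + 1) ω) := by
      ext ω
      simp only [Pi.add_apply, Pi.mul_apply, hMdef, Finset.prod_range_succ]
      ring
    have hprod : Integrable ((M t * lam (t + 1)) *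
        fun ω => V (L (t + 1) ω) (R (t + 1) ω) (Z (t + 1) ω)) μ := by
      rw [← sub_eq_of_eq_add' hsucc]
      exact (hMint (t + 1) ht).sub (hMint t ht.le)
    have hw0 : 0 ≤ᵐ[μ] M t * lam (t + 1) := by
      filter_upwards [hnonneg t ht.le] with ω hω
      exact mul_nonneg hω (hlam01 (t + 1) ω).1
    rw [hsucc]
    exact condExp_add_mul_le (ℱ.le t) (hmeas t ht.le) (hMint t ht.le)
      ((hmeas t ht.le).mul (hlam t ht)) hw0 (hVint t ht) hprod (hcond t ht)
  refine ⟨hmeas, hnonneg, hle, fun τ hτ hτT => ?_⟩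
  simpa [hMdef 0] using integral_stoppedValue_le_of_condExp_le hmeas hMint hle hτ hτT
end

section
/- Let (Ω,𝔽,P) be a probability space with a filtration (ℱ_t)_{t=0,…,T}, let (L_t)_{t=1,…,T} be an adapted process taking values in 𝒦⊆ℝ, let (R_t) and (R*_t) be predictable ℝ^d-valued processes, and let (λ_t) be a nonnegative predictable process such that inf_{x∈𝒦}{ λ_t(S(x,R_t)−S(x,R*_t)) } ≥ −1 almost surely for all t, where S:ℝ^{d+1}→ℝ is a scoring function. Suppose that for every t, E[S(L_t,R_t)−S(L_t,R*_t) | ℱ_{t−1}] ≤ 0 almost surely (the null hypothesis H⁻(ψ) of conditional S-dominance of (R_t) over (R*_t)). Then the process M⁻_0 = 1 and M⁻_t = ∏_{s=1}^{t}(1+λ_s(S(L_s,R_s)−S(L_s,R*_s))) is a nonnegative supermartingale with respect to (ℱ_t), and hence an e-process: E[M⁻_τ] ≤ 1 for every stopping time τ ≤ T. -/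
open MeasureTheory

/-- Bounded optional stopping for a process which is a supermartingale up to time `T`. -/
lemma integral_stoppedValue_le_integral_zero {Ω : Type*} {m0 : MeasurableSpace Ω}
    {μ : Measure Ω} [IsFiniteMeasure μ] {ℱ : Filtration ℕ m0} {T : ℕ} {M : ℕ → Ω → ℝ}
    (hadp : ∀ t, t ≤ T → StronglyMeasurable[ℱ t] (M t))
    (hint : ∀ t, t ≤ T → Integrable (M t) μ)
    (hsuper : ∀ t, t < T → μ[M (t + 1) | ℱ t] ≤ᵐ[μ] M t)
    {τ : Ω → ℕ} (hτ : IsStoppingTime ℱ (fun ω => (τ ω : WithTop ℕ))) (hτT : ∀ ω, τ ω ≤ T) :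
    ∫ ω, stoppedValue M (fun ω => (τ ω : WithTop ℕ)) ω ∂μ ≤ ∫ ω, M 0 ω ∂μ := by
  have hadp' : StronglyAdapted ℱ (fun t => M (min t T)) := fun t =>
    (hadp _ (min_le_right t T)).mono (ℱ.mono (min_le_left t T))
  have hsup : Supermartingale (fun t => M (min t T)) ℱ μ := by
    refine supermartingale_nat hadp' (fun t => hint _ (min_le_right t T)) fun t => ?_
    rcases lt_or_ge t T with h | h
    · simpa [min_eq_left h.le, min_eq_left (Nat.succ_le_of_lt h)] using hsuper t h
    · have hT : StronglyMeasurable[ℱ t] (M T) := (hadp T le_rfl).mono (ℱ.mono h)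
      simp only [min_eq_right h, min_eq_right (h.trans t.le_succ)]
      rw [condExp_of_stronglyMeasurable (ℱ.le t) hT (hint T le_rfl)]
  have key := hsup.neg.expected_stoppedValue_mono (N := T)
    (isStoppingTime_const ℱ 0) hτ (fun ω => WithTop.coe_le_coe.2 (Nat.zero_le (τ ω)))
    (fun ω => WithTop.coe_le_coe.2 (hτT ω))
  have huntop : ∀ ω, (τ ω : WithTop ℕ).untopA = τ ω := fun _ => rfl
  simpa [stoppedValue, integral_neg, huntop, hτT] using key

/-- Theorem elic: with `(L_t)` taking values in `𝒦`, predictable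
`ℝ^d`-valued forecasts `(R_t)`, `(R*_t)`, and a nonnegative predictable betting
process `(λ_t)` with `inf_{x∈𝒦} λ_t (S(x,R_t) − S(x,R*_t)) ≥ −1`, under the null
`H⁻(ψ)` of conditional S-dominance the process
`M⁻_t = ∏_{s=1}^t (1 + λ_s (S(L_s,R_s) − S(L_s,R*_s)))` is a nonnegative
supermartingale, hence an e-process: `E[M⁻_τ] ≤ 1` for every stopping time
`τ ≤ T`. -/
theorem stmt11 {Ω : Type*} {m0 : MeasurableSpace Ω}
    (μ : Measure Ω) [IsProbabilityMeasure μ]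
    (ℱ : Filtration ℕ m0) (T : ℕ) {d : ℕ}
    (𝒦 : Set ℝ)
    (L : ℕ → Ω → ℝ) (hL𝒦 : ∀ t ω, L t ω ∈ 𝒦)
    (hL : ∀ t, t ≤ T → StronglyMeasurable[ℱ t] (L t))
    (R Rs : ℕ → Ω → (Fin d → ℝ)) (lam : ℕ → Ω → ℝ)
    (hR : ∀ t, t < T → StronglyMeasurable[ℱ t] (R (t + 1)))
    (hRs : ∀ t, t < T → StronglyMeasurable[ℱ t] (Rs (t + 1)))
    (hlam : ∀ t, t < T → StronglyMeasurable[ℱ t] (lam (t + 1)))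
    (hlam0 : ∀ t ω, 0 ≤ lam t ω)
    (S : ℝ → (Fin d → ℝ) → ℝ)
    (hS : Measurable fun p : ℝ × (Fin d → ℝ) => S p.1 p.2)
    -- `inf_{x ∈ 𝒦} λ_t (S(x,R_t) − S(x,R*_t)) ≥ −1` almost surely
    (hbound : ∀ t, 1 ≤ t → t ≤ T → ∀ᵐ ω ∂μ, ∀ x ∈ 𝒦,
      -1 ≤ lam t ω * (S x (R t ω) - S x (Rs t ω)))
    (hdiffint : ∀ t, t < T → Integrable
      (fun ω => S (L (t + 1) ω) (R (t + 1) ω) - S (L (t + 1) ω) (Rs (t + 1) ω)) μ)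
    -- the null `H⁻(ψ)`: conditional S-dominance of `(R_t)` over `(R*_t)`
    (hcond : ∀ t, t < T →
      μ[fun ω => S (L (t + 1) ω) (R (t + 1) ω) - S (L (t + 1) ω) (Rs (t + 1) ω) | ℱ t]
        ≤ᵐ[μ] 0)
    (Mm : ℕ → Ω → ℝ)
    (hMdef : ∀ t ω, Mm t ω = ∏ s ∈ Finset.range t,
      (1 + lam (s + 1) ω * (S (L (s + 1) ω) (R (s + 1) ω) - S (L (s + 1) ω) (Rs (s + 1) ω))))
    (hMint : ∀ t, t ≤ T → Integrable (Mm t) μ) :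
    -- `(M⁻_t)` is a nonnegative supermartingale w.r.t. `(ℱ_t)`
    (∀ t, t ≤ T → StronglyMeasurable[ℱ t] (Mm t)) ∧
    (∀ t, t ≤ T → ∀ᵐ ω ∂μ, 0 ≤ Mm t ω) ∧
    (∀ t, t < T → μ[Mm (t + 1) | ℱ t] ≤ᵐ[μ] Mm t) ∧
    -- hence an e-process: `E[M⁻_τ] ≤ 1` for every stopping time `τ ≤ T`
    (∀ τ : Ω → ℕ, IsStoppingTime ℱ (fun ω => (τ ω : WithTop ℕ)) → (∀ ω, τ ω ≤ T) →
      ∫ ω, stoppedValue Mm (fun ω => (τ ω : WithTop ℕ)) ω ∂μ ≤ 1) := by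
  set D : ℕ → Ω → ℝ := fun s ω => S (L s ω) (R s ω) - S (L s ω) (Rs s ω)
  have hMsucc : ∀ t ω, Mm (t + 1) ω = Mm t ω * (1 + lam (t + 1) ω * D (t + 1) ω) := by
    intro t ω
    rw [hMdef, hMdef, Finset.prod_range_succ]
  have hDmeas : ∀ t, t < T → StronglyMeasurable[ℱ (t + 1)] (D (t + 1)) := by
    intro t ht
    have hle : ℱ t ≤ ℱ (t + 1) := ℱ.mono t.le_succ
    have hLm := (hL (t + 1) ht).measurable
    exact ((hS.comp (hLm.prodMk ((hR t ht).mono hle).measurable)).sub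
      (hS.comp (hLm.prodMk ((hRs t ht).mono hle).measurable))).stronglyMeasurable
  have hadp : ∀ t, t ≤ T → StronglyMeasurable[ℱ t] (Mm t) := by
    intro t
    induction t with
    | zero =>
      intro _
      rw [show Mm 0 = fun _ => (1 : ℝ) from funext fun ω => by simp [hMdef]]
      exact stronglyMeasurable_const
    | succ t ih =>
      intro ht
      have hle : ℱ t ≤ ℱ (t + 1) := ℱ.mono t.le_succ
      rw [show Mm (t + 1) = fun ω => Mm t ω * (1 + lam (t + 1) ω * D (t + 1) ω) from
        funext (hMsucc t)]
      exact ((ih (by omega)).mono hle).mul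
        (stronglyMeasurable_const.add (((hlam t ht).mono hle).mul (hDmeas t ht)))
  have hnonneg : ∀ t, t ≤ T → ∀ᵐ ω ∂μ, 0 ≤ Mm t ω := by
    intro t
    induction t with
    | zero => exact fun _ => .of_forall fun ω => by simp [hMdef]
    | succ t ih =>
      intro ht
      filter_upwards [ih (by omega), hbound (t + 1) (by omega) ht] with ω h₁ h₂
      rw [hMsucc]
      exact mul_nonneg h₁ (by linarith [h₂ _ (hL𝒦 (t + 1) ω)])
  have hsuper : ∀ t, t < T → μ[Mm (t + 1) | ℱ t] ≤ᵐ[μ] Mm t := by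
    intro t ht
    have hMt := hadp t ht.le
    have hincr : Mm (t + 1) = Mm t + Mm t * lam (t + 1) * D (t + 1) := by
      ext ω
      simp only [hMsucc, Pi.add_apply, Pi.mul_apply]
      ring
    have hprod : Integrable (Mm t * lam (t + 1) * D (t + 1)) μ := by
      have := (hMint (t + 1) ht).sub (hMint t ht.le)
      rwa [hincr, add_sub_cancel_left] at this
    have hpull := condExp_mul_of_stronglyMeasurable_left (hMt.mul (hlam t ht)) hprod
      (hdiffint t ht)
    have hadd := condExp_add (hMint t ht.le) hprod (ℱ t)
    rw [condExp_of_stronglyMeasurable (ℱ.le t) hMt (hMint t ht.le)] at hadd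
    rw [hincr]
    filter_upwards [hadd, hpull, hcond t ht, hnonneg t ht.le] with ω h₁ h₂ h₃ h₄
    have h₅ := mul_nonpos_of_nonneg_of_nonpos (mul_nonneg h₄ (hlam0 (t + 1) ω)) h₃
    rw [h₁, Pi.add_apply, h₂]
    simpa using h₅
  refine ⟨hadp, hnonneg, hsuper, fun τ hτ hτT => ?_⟩
  exact (integral_stoppedValue_le_integral_zero hadp hMint hsuper hτ hτT).trans
    (by simp [hMdef])
end
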